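/- Let d ≥ 1 and ε > 0. For every vector h = (h₁,…,h_d) with 0 < h₁ ≤ ⋯ ≤ h_d ≤ 1 one has κ(h, ε) ≥ κ(𝟙, ε), where 𝟙 = (1,…,1) ∈ ℝ^d is the vector of ones; that is, the minimum of κ(·, ε) over the simplex { h : 0 < h₁ ≤ ⋯ ≤ h_d ≤ 1 } is attained at h = 𝟙, where P_𝟙 is the space of functions e^{−t}·q(t) with q a real polynomial of degree ≤ d−1. -/

import Mathlib

/-- The sup of `|p|` over the half-line `[0, ∞)`. -/
noncomputable def supAbs (p : ℝ → ℝ) : ℝ :=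
  sSup ((fun t => |p t|) '' Set.Ici (0 : ℝ))

/-- The space `P_h` of exponential polynomials with exponents `h₁ ≤ ⋯ ≤ h_d`:
the span of the functions `t^m * exp (-h i * t)`, where `m` is the number of
indices `j < i` with `h j = h i`. -/
def expPoly (d : ℕ) (h : Fin d → ℝ) : Set (ℝ → ℝ) :=
  {p | ∃ c : Fin d → ℝ, ∀ t : ℝ,
      p t = ∑ i : Fin d,
        c i * t ^ (Nat.card {j : Fin d // j < i ∧ h j = h i}) * Real.exp (-(h i) * t)}

/-- `κ(h, ε)`: the infimum of `(1 − p(0)) / (p'(0) − ε p(0))` over all `p ∈ P_h`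
with `sup_{t ≥ 0} |p(t)| ≤ 1` and `p'(0) > ε p(0)`. -/
noncomputable def kappa (d : ℕ) (h : Fin d → ℝ) (ε : ℝ) : ℝ :=
  sInf {y : ℝ | ∃ p ∈ expPoly d h, supAbs p ≤ 1 ∧ ε * p 0 < deriv p 0 ∧
      y = (1 - p 0) / (deriv p 0 - ε * p 0)}

/-!
`P_h` is the kernel of `∏ (D + h i)`, and `κ(·, ε)` decreases when a single exponent `b` is raised
to `b'`: every `p` in the unit ball of the space with exponents `b, L` is matched by some `q` in the
unit ball of the space with exponents `b', L` such that `q 0 = p 0` and `p' 0 ≤ q' 0`.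

By Helly's theorem it suffices to find `q` with `|q| ≤ 1` only at finitely many nodes, as many as
the dimension and including `0`. Interpolate `p` at the nodes in the space with exponents `M`: if
`(-1) ^ |M| * ∏ (D + a) p > 0`, the product running over `a ∈ M`, then Rolle's theorem shows that
the interpolant has slope at `0` larger than `p' 0`. Since `∏ (D + a) p = c * exp (-b * t)` for the
exponents in `L`, and this becomes `c * (b' - b) * exp (-b * t)` when `b'` is adjoined to `L`, the
sign condition holds for `M = L` or for `M = b', L` unless `c = 0`, when `q = p` will do.
-/

open Finset
open scoped ContDiff NNReal

/-! ### Helly's theorem for systems of linear constraints -/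

section Helly

variable {ι E : Type*} [AddCommGroup E] [Module ℝ E] [FiniteDimensional ℝ E] [TopologicalSpace E]

theorem helly_theorem_of_isClosed {F : ι → Set E} (hconvex : ∀ i, Convex ℝ (F i))
    (hclosed : ∀ i, IsClosed (F i)) (J : Finset ι) (hcompact : IsCompact (⋂ i ∈ J, F i))
    (hinter : ∀ I : Finset ι, #I ≤ Module.finrank ℝ E + 1 → (⋂ i ∈ I, F i).Nonempty) :
    (⋂ i, F i).Nonempty := by
  classical
  have hfin (I : Finset ι) : (⋂ i ∈ I, F i).Nonempty :=
    Convex.helly_theorem' (fun i _ => hconvex i) fun K _ hK => hinter K hK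
  have h := hcompact.inter_iInter_nonempty F hclosed fun I => by
    simpa only [mem_union, Set.iInter_or, Set.iInter_inter_distrib] using hfin (J ∪ I)
  exact h.mono Set.inter_subset_right

variable [IsTopologicalAddGroup E] [ContinuousSMul ℝ E] [T2Space E]

theorem isCompact_iInter_preimage_dual (ℓ : ι → Module.Dual ℝ E) {I : ι → Set ℝ} {J : Finset ι}
    (hsep : ∀ v, (∀ i ∈ J, ℓ i v = 0) → v = 0) (hI : ∀ i ∈ J, IsCompact (I i)) :
    IsCompact (⋂ i ∈ J, ℓ i ⁻¹' I i) := by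
  let L : E →ₗ[ℝ] J → ℝ := LinearMap.pi fun i => ℓ i
  have hL : LinearMap.ker L = ⊥ := LinearMap.ker_eq_bot'.2 fun v hv =>
    hsep v fun i hi => congrFun hv ⟨i, hi⟩
  have hbox : IsCompact (Set.univ.pi fun i : J => I i) := isCompact_univ_pi fun i => hI i i.2
  convert (LinearMap.isClosedEmbedding_of_injective hL).isCompact_preimage hbox using 1
  ext v
  simp [L]

theorem exists_forall_dual_mem_of_card_le_finrank_add_one (ℓ : ι → Module.Dual ℝ E) {I : ι → Set ℝ}
    (hconvex : ∀ i, Convex ℝ (I i)) (hclosed : ∀ i, IsClosed (I i)) {J : Finset ι}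
    (hsep : ∀ v, (∀ i ∈ J, ℓ i v = 0) → v = 0) (hcompact : ∀ i ∈ J, IsCompact (I i))
    (hsolve : ∀ K : Finset ι, #K ≤ Module.finrank ℝ E + 1 → ∃ v, ∀ i ∈ K, ℓ i v ∈ I i) :
    ∃ v, ∀ i, ℓ i v ∈ I i := by
  obtain ⟨v, hv⟩ := helly_theorem_of_isClosed (F := fun i => ℓ i ⁻¹' I i)
    (fun i => (hconvex i).linear_preimage (ℓ i))
    (fun i => (hclosed i).preimage (ℓ i).continuous_of_finiteDimensional) J
    (isCompact_iInter_preimage_dual ℓ hsep hcompact)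
    fun K hK => (hsolve K hK).imp fun v hv => Set.mem_iInter₂.2 hv
  exact ⟨v, Set.mem_iInter.1 hv⟩

end Helly

/-! ### Exponential polynomials as kernels of differential operators -/

/-- The space of smooth functions `ℝ → ℝ`, the domain of the differential operators below. -/
def smoothFunctions : Submodule ℝ (ℝ → ℝ) where
  carrier := {f | ContDiff ℝ ∞ f}
  add_mem' := by
    simp only [Set.mem_ofPred_eq]
    exact ContDiff.add
  zero_mem' := by
    simp only [Set.mem_ofPred_eq]
    exact contDiff_const
  smul_mem' c f := by
    simp only [Set.mem_ofPred_eq]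
    exact ContDiff.const_smul c

theorem mem_smoothFunctions {f : ℝ → ℝ} : f ∈ smoothFunctions ↔ ContDiff ℝ ∞ f :=
  Set.mem_ofPred

instance : CoeFun smoothFunctions fun _ => ℝ → ℝ := ⟨Subtype.val⟩

theorem contDiff_smoothFunctions (f : smoothFunctions) : ContDiff ℝ ∞ f :=
  mem_smoothFunctions.1 f.2

theorem differentiable_smoothFunctions (f : smoothFunctions) : Differentiable ℝ f :=
  (contDiff_smoothFunctions f).differentiable (by simp)

/-- Differentiation as a linear operator on smooth functions. -/
noncomputable def smoothDeriv : Module.End ℝ smoothFunctions where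
  toFun f := ⟨deriv f, mem_smoothFunctions.2
    (contDiff_infty_iff_deriv.1 (contDiff_smoothFunctions f)).2⟩
  map_add' f g := Subtype.ext <| funext fun t =>
    deriv_add (differentiable_smoothFunctions f t) (differentiable_smoothFunctions g t)
  map_smul' c f := Subtype.ext <| funext fun t =>
    deriv_const_smul c (differentiable_smoothFunctions f t)

theorem smoothDeriv_apply (f : smoothFunctions) (t : ℝ) : smoothDeriv f t = deriv f t := rfl

/-- The differential operator `∏ (D + a)`, the product running over the exponents `a ∈ M`. -/
noncomputable def expOp (M : Multiset ℝ) : Module.End ℝ smoothFunctions :=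
  Polynomial.aeval smoothDeriv (M.map fun a => Polynomial.X + Polynomial.C a).prod

theorem expOp_zero (f : smoothFunctions) : expOp 0 f = f := by simp [expOp]

theorem expOp_singleton (a : ℝ) (f : smoothFunctions) :
    expOp {a} f = smoothDeriv f + a • f := by
  simp [expOp, Algebra.algebraMap_eq_smul_one]

theorem expOp_add (M N : Multiset ℝ) (f : smoothFunctions) :
    expOp (M + N) f = expOp M (expOp N f) := by
  simp [expOp]

theorem expOp_cons (a : ℝ) (M : Multiset ℝ) (f : smoothFunctions) :
    expOp (a ::ₘ M) f = expOp {a} (expOp M f) := by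
  rw [← Multiset.singleton_add, expOp_add]

theorem expOp_cons_comm (a : ℝ) (M : Multiset ℝ) (f : smoothFunctions) :
    expOp (a ::ₘ M) f = expOp M (expOp {a} f) := by
  rw [← Multiset.singleton_add, add_comm, expOp_add]

theorem expOp_singleton_apply (a : ℝ) (f : smoothFunctions) (t : ℝ) :
    expOp {a} f t = deriv f t + a * f t := by
  rw [expOp_singleton]
  rfl

theorem hasDerivAt_exp_mul (a : ℝ) (f : smoothFunctions) (t : ℝ) :
    HasDerivAt (fun t => Real.exp (a * t) * f t) (Real.exp (a * t) * expOp {a} f t) t := by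
  have hexp : HasDerivAt (fun t => Real.exp (a * t)) (Real.exp (a * t) * (a * 1)) t :=
    ((hasDerivAt_id t).const_mul a).exp
  refine (hexp.mul (differentiable_smoothFunctions f t).hasDerivAt).congr_deriv ?_
  rw [expOp_singleton_apply]
  ring

/-- The exponential monomial `t ↦ t ^ m * exp (-b * t)`. -/
noncomputable def expMonomial (m : ℕ) (b : ℝ) : smoothFunctions :=
  ⟨fun t => t ^ m * Real.exp (-b * t), mem_smoothFunctions.2 (by fun_prop)⟩

theorem expMonomial_apply (m : ℕ) (b t : ℝ) :
    expMonomial m b t = t ^ m * Real.exp (-b * t) := rfl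

theorem expMonomial_zero_pos (b t : ℝ) : 0 < expMonomial 0 b t := by
  simpa [expMonomial_apply] using Real.exp_pos _

theorem deriv_expMonomial (m : ℕ) (b t : ℝ) :
    deriv (expMonomial m b) t = m * t ^ (m - 1) * Real.exp (-b * t) - b * expMonomial m b t := by
  have hexp : HasDerivAt (fun t => Real.exp (-b * t)) (Real.exp (-b * t) * (-b * 1)) t :=
    ((hasDerivAt_id t).const_mul (-b)).exp
  refine ((hasDerivAt_pow m t).mul hexp).deriv.trans ?_
  rw [expMonomial_apply]
  ring

theorem expOp_singleton_expMonomial_zero (a b : ℝ) :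
    expOp {a} (expMonomial 0 b) = (a - b) • expMonomial 0 b := by
  ext t
  simp only [expOp_singleton_apply, deriv_expMonomial, Submodule.coe_smul, Pi.smul_apply,
    smul_eq_mul, Nat.cast_zero]
  ring

theorem expOp_singleton_expMonomial_succ (m : ℕ) (b : ℝ) :
    expOp {b} (expMonomial (m + 1) b) = ((m : ℝ) + 1) • expMonomial m b := by
  ext t
  simp only [expOp_singleton_apply, deriv_expMonomial, expMonomial_apply, Submodule.coe_smul,
    Pi.smul_apply, smul_eq_mul, Nat.cast_succ, Nat.add_sub_cancel]
  ring

theorem eq_smul_expMonomial_of_expOp_singleton_eq_zero {a : ℝ} {f : smoothFunctions}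
    (hf : expOp {a} f = 0) : f = f 0 • expMonomial 0 a := by
  have hderiv (t : ℝ) : HasDerivAt (fun t => Real.exp (a * t) * f t) 0 t := by
    simpa [hf] using hasDerivAt_exp_mul a f t
  ext t
  have hconst : Real.exp (a * t) * f t = f 0 := by
    simpa using is_const_of_deriv_eq_zero (fun t => (hderiv t).differentiableAt)
      (fun t => (hderiv t).deriv) t 0
  simp only [Submodule.coe_smul, Pi.smul_apply, expMonomial_apply, smul_eq_mul]
  rw [← hconst, neg_mul, Real.exp_neg]
  field_simp

/-- The solution space of `∏ (D + a) f = 0`, the product running over `a ∈ M`; it is `P_h` when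
`M` is the multiset of the entries of `h`. -/
noncomputable def expSpace (M : Multiset ℝ) : Submodule ℝ smoothFunctions :=
  LinearMap.ker (expOp M)

theorem mem_expSpace {M : Multiset ℝ} {f : smoothFunctions} :
    f ∈ expSpace M ↔ expOp M f = 0 := LinearMap.mem_ker

theorem mem_expSpace_zero {f : smoothFunctions} : f ∈ expSpace 0 ↔ f = 0 := by
  rw [mem_expSpace, expOp_zero]

theorem expSpace_mono {M N : Multiset ℝ} (h : M ≤ N) : expSpace M ≤ expSpace N := by
  obtain ⟨K, rfl⟩ := Multiset.le_iff_exists_add.1 h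
  intro f hf
  rw [mem_expSpace] at hf ⊢
  rw [add_comm, expOp_add, hf, map_zero]

theorem exists_expOp_eq_smul_of_mem_expSpace_cons {b : ℝ} {M : Multiset ℝ} {f : smoothFunctions}
    (hf : f ∈ expSpace (b ::ₘ M)) : ∃ c : ℝ, expOp M f = c • expMonomial 0 b := by
  rw [mem_expSpace, expOp_cons] at hf
  exact ⟨_, eq_smul_expMonomial_of_expOp_singleton_eq_zero hf⟩

theorem exists_expOp_expMonomial_count (M : Multiset ℝ) (b : ℝ) :
    ∃ c : ℝ, c ≠ 0 ∧ expOp M (expMonomial (M.count b) b) = c • expMonomial 0 b := by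
  induction M using Multiset.induction_on with
  | empty => exact ⟨1, one_ne_zero, by simp [expOp_zero]⟩
  | cons a M ih =>
    obtain ⟨c, hc, hM⟩ := ih
    by_cases hab : b = a
    · subst hab
      refine ⟨(M.count b + 1) * c, mul_ne_zero (by positivity) hc, ?_⟩
      rw [Multiset.count_cons_self, expOp_cons_comm, expOp_singleton_expMonomial_succ, map_smul,
        hM, smul_smul]
    · refine ⟨c * (a - b), mul_ne_zero hc (sub_ne_zero.2 (Ne.symm hab)), ?_⟩
      rw [Multiset.count_cons_of_ne hab, expOp_cons, hM, map_smul,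
        expOp_singleton_expMonomial_zero, smul_smul]

theorem expMonomial_count_mem_expSpace_cons (M : Multiset ℝ) (b : ℝ) :
    expMonomial (M.count b) b ∈ expSpace (b ::ₘ M) := by
  obtain ⟨c, -, hM⟩ := exists_expOp_expMonomial_count M b
  rw [mem_expSpace, expOp_cons, hM, map_smul, expOp_singleton_expMonomial_zero, sub_self,
    zero_smul, smul_zero]

theorem expMonomial_count_notMem_expSpace (M : Multiset ℝ) (b : ℝ) :
    expMonomial (M.count b) b ∉ expSpace M := by
  obtain ⟨c, hc, hM⟩ := exists_expOp_expMonomial_count M b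
  rw [mem_expSpace, hM]
  intro h
  have h0 : c * expMonomial 0 b 0 = 0 := congrFun (congrArg Subtype.val h) 0
  exact mul_ne_zero hc (expMonomial_zero_pos b 0).ne' h0

theorem mem_expSpace_cons_iff {b : ℝ} {M : Multiset ℝ} {f : smoothFunctions} :
    f ∈ expSpace (b ::ₘ M) ↔ ∃ c : ℝ, f - c • expMonomial (M.count b) b ∈ expSpace M := by
  constructor
  · intro hf
    obtain ⟨c, hc⟩ := exists_expOp_eq_smul_of_mem_expSpace_cons hf
    obtain ⟨k, hk, hM⟩ := exists_expOp_expMonomial_count M b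
    refine ⟨c / k, ?_⟩
    rw [mem_expSpace, map_sub, map_smul, hc, hM, smul_smul, div_mul_cancel₀ c hk, sub_self]
  · rintro ⟨c, hc⟩
    have h := (expSpace (b ::ₘ M)).add_mem (expSpace_mono (Multiset.le_cons_self M b) hc)
      (Submodule.smul_mem _ c (expMonomial_count_mem_expSpace_cons M b))
    rwa [sub_add_cancel] at h

theorem expMonomial_zero_mem_expSpace {b : ℝ} {M : Multiset ℝ} (hb : b ∈ M) :
    expMonomial 0 b ∈ expSpace M :=
  expSpace_mono (Multiset.singleton_le.2 hb) (expMonomial_count_mem_expSpace_cons 0 b)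

/-! ### Zeros and interpolation -/

theorem exists_zeros_expOp_singleton (a : ℝ) {f : smoothFunctions} {n : ℕ} {Z : Finset ℝ}
    (hcard : #Z = n + 1) (hZ : ∀ z ∈ Z, f z = 0) :
    ∃ Z' : Finset ℝ, #Z' = n ∧ (∀ z ∈ Z', expOp {a} f z = 0) ∧ ∀ z ∈ Z', ∃ y ∈ Z, y < z := by
  let e := Z.orderEmbOfFin hcard
  have he (i) : e i ∈ Z := Z.orderEmbOfFin_mem hcard i
  have hrolle (i : Fin n) : ∃ x ∈ Set.Ioo (e i.castSucc) (e i.succ), expOp {a} f x = 0 := by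
    obtain ⟨x, hx, hx0⟩ := exists_hasDerivAt_eq_zero (e.strictMono i.castSucc_lt_succ)
      (fun t _ => (hasDerivAt_exp_mul a f t).continuousAt.continuousWithinAt)
      (by simp [hZ _ (he _)]) (fun t _ => hasDerivAt_exp_mul a f t)
    exact ⟨x, hx, (mul_eq_zero.1 hx0).resolve_left (Real.exp_ne_zero _)⟩
  choose ζ hζ hζ0 using hrolle
  have hmono : StrictMono ζ := fun i j hij =>
    (hζ i).2.trans_le ((e.monotone (Fin.succ_le_castSucc_iff.2 hij)).trans (hζ j).1.le)
  refine ⟨univ.image ζ, ?_, by simpa using hζ0, ?_⟩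
  · rw [card_image_of_injective _ hmono.injective, card_univ, Fintype.card_fin]
  · simpa using fun i => ⟨_, he _, (hζ i).1⟩

theorem eq_zero_of_mem_expSpace_of_card_le {M : Multiset ℝ} {f : smoothFunctions}
    (hf : f ∈ expSpace M) {Z : Finset ℝ} (hcard : M.card ≤ #Z) (hZ : ∀ z ∈ Z, f z = 0) :
    f = 0 := by
  induction M using Multiset.induction_on generalizing f Z with
  | empty => exact mem_expSpace_zero.1 hf
  | cons a M ih =>
    rw [Multiset.card_cons] at hcard
    obtain ⟨n, hn⟩ : ∃ n, #Z = n + 1 := Nat.exists_eq_add_one.2 (by lia)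
    obtain ⟨Z', hcard', hZ', -⟩ := exists_zeros_expOp_singleton a hn hZ
    rw [mem_expSpace, expOp_cons_comm] at hf
    have hexp := eq_smul_expMonomial_of_expOp_singleton_eq_zero (ih hf (by lia) hZ')
    obtain ⟨z, hz⟩ : Z.Nonempty := card_pos.1 (by lia)
    have hfz : f 0 * expMonomial 0 a z = 0 := (congrFun (congrArg Subtype.val hexp) z).symm.trans
      (hZ z hz)
    rw [hexp, (mul_eq_zero.1 hfz).resolve_right (expMonomial_zero_pos a z).ne', zero_smul]

/-- Restriction of the functions in `V` to the points of `Z`. -/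
def restrictTo (V : Submodule ℝ smoothFunctions) (Z : Finset ℝ) : V →ₗ[ℝ] Z → ℝ where
  toFun f z := (f : smoothFunctions) z
  map_add' _ _ := rfl
  map_smul' _ _ := rfl

theorem restrictTo_expSpace_injective {M : Multiset ℝ} {Z : Finset ℝ} (hcard : M.card ≤ #Z) :
    Function.Injective (restrictTo (expSpace M) Z) :=
  (injective_iff_map_eq_zero _).2 fun f hf => Subtype.ext <|
    eq_zero_of_mem_expSpace_of_card_le f.2 hcard fun z hz => congrFun hf ⟨z, hz⟩

instance (M : Multiset ℝ) : FiniteDimensional ℝ (expSpace M) := by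
  obtain ⟨Z, hZ⟩ := Infinite.exists_subset_card_eq ℝ M.card
  exact FiniteDimensional.of_injective _ (restrictTo_expSpace_injective hZ.ge)

theorem card_le_finrank_expSpace (M : Multiset ℝ) :
    M.card ≤ Module.finrank ℝ (expSpace M) := by
  induction M using Multiset.induction_on with
  | empty => exact Nat.zero_le _
  | cons b M ih =>
    have hlt : expSpace M < expSpace (b ::ₘ M) :=
      SetLike.lt_iff_le_and_exists.2 ⟨expSpace_mono (Multiset.le_cons_self M b), _,
        expMonomial_count_mem_expSpace_cons M b, expMonomial_count_notMem_expSpace M b⟩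
    rw [Multiset.card_cons]
    exact ih.trans_lt (Submodule.finrank_lt_finrank_of_lt hlt)

theorem finrank_expSpace (M : Multiset ℝ) : Module.finrank ℝ (expSpace M) = M.card := by
  obtain ⟨Z, hZ⟩ := Infinite.exists_subset_card_eq ℝ M.card
  refine le_antisymm ?_ (card_le_finrank_expSpace M)
  simpa [hZ] using LinearMap.finrank_le_finrank_of_injective (restrictTo_expSpace_injective hZ.ge)

theorem exists_mem_expSpace_eqOn {M : Multiset ℝ} {Z : Finset ℝ} (hcard : #Z = M.card)
    (y : ℝ → ℝ) : ∃ f ∈ expSpace M, ∀ z ∈ Z, f z = y z := by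
  have hfinrank : Module.finrank ℝ (expSpace M) = Module.finrank ℝ (Z → ℝ) := by
    simp [finrank_expSpace, hcard]
  have hsurj : Function.Surjective (restrictTo (expSpace M) Z) :=
    (LinearMap.injective_iff_surjective_of_finrank_eq_finrank (V := expSpace M) hfinrank).1
      (restrictTo_expSpace_injective hcard.ge)
  obtain ⟨f, hf⟩ := hsurj fun z => y z
  exact ⟨f, f.2, fun z hz => congrFun hf ⟨z, hz⟩⟩

theorem pos_of_lt_zeros_of_expOp_pos {M : Multiset ℝ} {f : smoothFunctions}
    (hf : ∀ t, 0 < (-1) ^ M.card * expOp M f t) {Z : Finset ℝ} (hcard : #Z = M.card)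
    (hZ : ∀ z ∈ Z, f z = 0) {t : ℝ} (ht : ∀ z ∈ Z, t < z) : 0 < f t := by
  induction M using Multiset.induction_on generalizing f Z t with
  | empty => simpa [expOp_zero] using hf t
  | cons a M ih =>
    rw [Multiset.card_cons] at hcard
    obtain ⟨Z', hcard', hZ', hlt⟩ := exists_zeros_expOp_singleton a hcard hZ
    have hne : Z.Nonempty := card_pos.1 (by lia)
    have hneg (x : ℝ) (hx : x ≤ Z.min' hne) : expOp {a} f x < 0 := by
      refine neg_pos.1 (ih (f := -expOp {a} f) (fun t => ?_) hcard' (by simpa using hZ') ?_)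
      · simpa [expOp_cons_comm, pow_succ] using hf t
      · intro z hz
        obtain ⟨y, hy, hyz⟩ := hlt z hz
        exact (hx.trans (Z.min'_le y hy)).trans_lt hyz
    have hanti : StrictAntiOn (fun t => Real.exp (a * t) * f t) (Set.Iic (Z.min' hne)) := by
      refine strictAntiOn_of_deriv_neg (convex_Iic _)
        (fun x _ => (hasDerivAt_exp_mul a f x).continuousAt.continuousWithinAt) fun x hx => ?_
      rw [(hasDerivAt_exp_mul a f x).deriv]
      exact mul_neg_of_pos_of_neg (Real.exp_pos _) (hneg x (Set.mem_Iic.1 (interior_subset hx)))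
    have hmin := ht _ (Z.min'_mem hne)
    have hval := hanti hmin.le (Set.mem_Iic.2 le_rfl) hmin
    simp only [hZ _ (Z.min'_mem hne), mul_zero] at hval
    exact (mul_pos_iff_of_pos_left (Real.exp_pos _)).1 hval

theorem deriv_neg_of_expOp_pos {M : Multiset ℝ} {f : smoothFunctions}
    (hf : ∀ t, 0 < (-1) ^ M.card * expOp M f t) {Z : Finset ℝ} (hcard : #Z = M.card)
    (hZ : ∀ z ∈ Z, f z = 0) {x : ℝ} (hx : x ∈ Z) (hmin : ∀ z ∈ Z, x ≤ z) : deriv f x < 0 := by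
  obtain ⟨a, ha⟩ : ∃ a, a ∈ M := Multiset.card_pos_iff_exists_mem.1 (hcard ▸ card_pos.2 ⟨x, hx⟩)
  obtain ⟨M, rfl⟩ := Multiset.exists_cons_of_mem ha
  rw [Multiset.card_cons] at hcard
  obtain ⟨Z', hcard', hZ', hlt⟩ := exists_zeros_expOp_singleton a hcard hZ
  have hneg : 0 < (-expOp {a} f) x := by
    refine pos_of_lt_zeros_of_expOp_pos (fun t => ?_) hcard' (by simpa using hZ') fun z hz => ?_
    · simpa [expOp_cons_comm, pow_succ] using hf t
    · obtain ⟨y, hy, hyz⟩ := hlt z hz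
      exact (hmin y hy).trans_lt hyz
  simpa [expOp_singleton_apply, hZ x hx] using hneg

/-! ### Slopes at zero -/

/-- Some `q` in the space with exponents `M` satisfies `|q| ≤ 1` on `[0, ∞)` and `q 0 = s`, with
slope at least `δ` at `0`. For fixed `s = p 0` the quotient defining `κ` decreases with the slope,
so `κ` compares as these predicates do. -/
def AdmitsSlope (M : Multiset ℝ) (s δ : ℝ) : Prop :=
  ∃ q ∈ expSpace M, q 0 = s ∧ (∀ t ≥ 0, |q t| ≤ 1) ∧ δ ≤ deriv q 0

theorem AdmitsSlope.mono {M N : Multiset ℝ} {s δ : ℝ} (hM : AdmitsSlope M s δ) (h : M ≤ N) :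
    AdmitsSlope N s δ :=
  hM.imp fun _ hq => ⟨expSpace_mono h hq.1, hq.2⟩

theorem AdmitsSlope.anti {M : Multiset ℝ} {s δ δ' : ℝ} (hM : AdmitsSlope M s δ) (h : δ' ≤ δ) :
    AdmitsSlope M s δ' :=
  hM.imp fun _ hq => ⟨hq.1, hq.2.1, hq.2.2.1, h.trans hq.2.2.2⟩

theorem abs_smul_expMonomial_zero_le_one {a s : ℝ} (ha : 0 ≤ a) (hs : |s| ≤ 1) {t : ℝ}
    (ht : 0 ≤ t) : |(s • expMonomial 0 a) t| ≤ 1 := by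
  have hexp : Real.exp (-a * t) ≤ 1 := Real.exp_le_one_iff.2 (by nlinarith)
  simpa [expMonomial_apply, abs_mul] using mul_le_one₀ hs (Real.exp_pos _).le hexp

/-- The functions of `expSpace M` vanishing at `0`: differences of functions with equal value
at `0`. -/
noncomputable def expSpaceVanishing (M : Multiset ℝ) : Submodule ℝ smoothFunctions :=
  expSpace M ⊓ LinearMap.ker ((LinearMap.proj 0).comp smoothFunctions.subtype)

theorem mem_expSpaceVanishing {M : Multiset ℝ} {f : smoothFunctions} :
    f ∈ expSpaceVanishing M ↔ f ∈ expSpace M ∧ f 0 = 0 := Iff.rfl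

instance (M : Multiset ℝ) : FiniteDimensional ℝ (expSpaceVanishing M) :=
  Submodule.finiteDimensional_inf_left _ _

theorem finrank_expSpaceVanishing_lt {M : Multiset ℝ} {a : ℝ} (ha : a ∈ M) :
    Module.finrank ℝ (expSpaceVanishing M) < M.card := by
  rw [← finrank_expSpace M]
  refine Submodule.finrank_lt_finrank_of_lt (SetLike.lt_iff_le_and_exists.2 ⟨inf_le_left, _,
    expMonomial_zero_mem_expSpace ha, fun h => ?_⟩)
  exact (expMonomial_zero_pos a 0).ne' (mem_expSpaceVanishing.1 h).2

/-- The slope at `0` (index `none`) and the values at `t ≥ 0` (index `some t`), as functionals on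
the functions of `expSpace M` vanishing at `0`. -/
noncomputable def slopeOrValue (M : Multiset ℝ) :
    Option ℝ≥0 → Module.Dual ℝ (expSpaceVanishing M)
  | none => LinearMap.proj 0 ∘ₗ smoothFunctions.subtype ∘ₗ smoothDeriv ∘ₗ
      (expSpaceVanishing M).subtype
  | some t => LinearMap.proj (t : ℝ) ∘ₗ smoothFunctions.subtype ∘ₗ (expSpaceVanishing M).subtype

theorem exists_slopeOrValue_separating (M : Multiset ℝ) :
    ∃ T : Finset ℝ≥0, ∀ v, (∀ t ∈ T, slopeOrValue M (some t) v = 0) → v = 0 := by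
  obtain ⟨T, hT⟩ := Infinite.exists_subset_card_eq ℝ≥0 M.card
  refine ⟨T, fun v hv => Subtype.ext ?_⟩
  refine eq_zero_of_mem_expSpace_of_card_le (mem_expSpaceVanishing.1 v.2).1
    (Z := T.map ⟨NNReal.toReal, NNReal.coe_injective⟩) (by rw [card_map, hT]) fun z hz => ?_
  obtain ⟨t, ht, rfl⟩ := mem_map.1 hz
  exact hv t ht

/-- The values that the functionals `slopeOrValue` must take at `v` for `u + v` to have modulus at
most `1` on `[0, ∞)` and slope at least `δ` at `0`. -/
noncomputable def slopeOrValueTarget (u : smoothFunctions) (δ : ℝ) : Option ℝ≥0 → Set ℝ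
  | none => Set.Ici (δ - deriv u 0)
  | some t => Set.Icc (-1 - u t) (1 - u t)

theorem slopeOrValue_none_mem_target {M : Multiset ℝ} {u : smoothFunctions} {δ : ℝ}
    {v : expSpaceVanishing M} :
    slopeOrValue M none v ∈ slopeOrValueTarget u δ none ↔
      δ ≤ deriv (u + v.1 : smoothFunctions) 0 := by
  rw [← smoothDeriv_apply, map_add]
  exact sub_le_iff_le_add' (α := ℝ)

theorem slopeOrValue_some_mem_target {M : Multiset ℝ} {u : smoothFunctions} {δ : ℝ} {t : ℝ≥0}
    {v : expSpaceVanishing M} :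
    slopeOrValue M (some t) v ∈ slopeOrValueTarget u δ (some t) ↔
      |(u + v.1 : smoothFunctions) t| ≤ 1 := by
  rw [abs_le]
  exact and_congr (sub_le_iff_le_add' (α := ℝ)) (le_sub_iff_add_le' (α := ℝ))

theorem exists_slopeOrValue_mem_target {M : Multiset ℝ} {u : smoothFunctions} (hu : u ∈ expSpace M)
    (hu1 : ∀ t ≥ 0, |u t| ≤ 1) {δ : ℝ}
    (h : ∀ Z : Finset ℝ≥0, 0 ∈ Z → #Z = M.card →
      ∃ w ∈ expSpace M, w 0 = u 0 ∧ (∀ t ∈ Z, |w t| ≤ 1) ∧ δ ≤ deriv w 0)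
    {K : Finset (Option ℝ≥0)} (hK : #K ≤ M.card) :
    ∃ v, ∀ i ∈ K, slopeOrValue M i v ∈ slopeOrValueTarget u δ i := by
  by_cases hnone : none ∈ K
  · have hcard : #(insert 0 K.eraseNone) ≤ M.card := by
      have hK' := card_eraseNone_of_mem hnone
      have hpos : 0 < #K := card_pos.2 ⟨_, hnone⟩
      have hins := card_insert_le 0 K.eraseNone
      lia
    obtain ⟨Z, hZ, hZcard⟩ := Infinite.exists_superset_card_eq _ _ hcard
    obtain ⟨w, hw, hw0, hw1, hδ⟩ := h Z (hZ (mem_insert_self _ _)) hZcard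
    have hv : w - u ∈ expSpaceVanishing M :=
      mem_expSpaceVanishing.2 ⟨Submodule.sub_mem _ hw hu, by simp [hw0]⟩
    refine ⟨⟨w - u, hv⟩, fun i hi => ?_⟩
    cases i with
    | none => rwa [slopeOrValue_none_mem_target, add_sub_cancel]
    | some t =>
      rw [slopeOrValue_some_mem_target, add_sub_cancel]
      exact hw1 t (hZ (mem_insert_of_mem (mem_eraseNone.2 hi)))
  · refine ⟨0, fun i hi => ?_⟩
    cases i with
    | none => exact absurd hi hnone
    | some t =>
      rw [slopeOrValue_some_mem_target, ZeroMemClass.coe_zero, add_zero]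
      exact hu1 t t.2

-- Subfamilies of the constraints that leave out the slope are solved by `s * exp (-a * t)`, so the
-- `finrank + 1 ≤ M.card` constraints allowed by Helly's theorem include fewer than `M.card` nodes,
-- and `0` can be added to them for free.
theorem admitsSlope_of_forall_card_eq {M : Multiset ℝ} {a : ℝ} (haM : a ∈ M) (ha : 0 ≤ a)
    {s δ : ℝ} (hs : |s| ≤ 1)
    (h : ∀ Z : Finset ℝ≥0, 0 ∈ Z → #Z = M.card →
      ∃ w ∈ expSpace M, w 0 = s ∧ (∀ t ∈ Z, |w t| ≤ 1) ∧ δ ≤ deriv w 0) :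
    AdmitsSlope M s δ := by
  let u : smoothFunctions := s • expMonomial 0 a
  have hu : u ∈ expSpace M := Submodule.smul_mem _ s (expMonomial_zero_mem_expSpace haM)
  have hu0 : u 0 = s := by simp [u, expMonomial_apply]
  obtain ⟨T, hT⟩ := exists_slopeOrValue_separating M
  obtain ⟨v, hv⟩ : ∃ v, ∀ i, slopeOrValue M i v ∈ slopeOrValueTarget u δ i := by
    refine exists_forall_dual_mem_of_card_le_finrank_add_one (E := expSpaceVanishing M)
      (J := T.map .some) (slopeOrValue M) ?_ ?_ ?_ ?_ ?_
    · rintro (_ | t)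
      exacts [convex_Ici _, convex_Icc _ _]
    · rintro (_ | t)
      exacts [isClosed_Ici, isClosed_Icc]
    · exact fun v hv => hT v fun t ht => hv _ (mem_map_of_mem _ ht)
    · intro i hi
      obtain ⟨t, -, rfl⟩ := mem_map.1 hi
      exact isCompact_Icc
    · intro K hK
      refine exists_slopeOrValue_mem_target hu
        (fun t ht => abs_smul_expMonomial_zero_le_one ha hs ht) (by simpa only [hu0] using h) ?_
      exact hK.trans (finrank_expSpaceVanishing_lt haM)
  obtain ⟨hvM, hv0⟩ := mem_expSpaceVanishing.1 v.2
  exact ⟨u + v.1, Submodule.add_mem _ hu hvM, by simp [hu0, hv0],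
    fun t ht => slopeOrValue_some_mem_target.1 (hv (some ⟨t, ht⟩)),
    slopeOrValue_none_mem_target.1 (hv none)⟩

theorem admitsSlope_of_expOp_pos {M : Multiset ℝ} {a : ℝ} (haM : a ∈ M) (ha : 0 ≤ a)
    {p : smoothFunctions} (hp : ∀ t ≥ 0, |p t| ≤ 1) (hpos : ∀ t, 0 < (-1) ^ M.card * expOp M p t) :
    AdmitsSlope M (p 0) (deriv p 0) := by
  refine admitsSlope_of_forall_card_eq haM ha (hp 0 le_rfl) fun Z h0 hcard => ?_
  let Z' : Finset ℝ := Z.map ⟨NNReal.toReal, NNReal.coe_injective⟩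
  have hcard' : #Z' = M.card := by rw [card_map, hcard]
  have hmem {t : ℝ≥0} (ht : t ∈ Z) : (t : ℝ) ∈ Z' := mem_map_of_mem _ ht
  obtain ⟨w, hw, hwp⟩ := exists_mem_expSpace_eqOn hcard' p
  refine ⟨w, hw, hwp 0 (hmem h0), fun t ht => by simpa [hwp t (hmem ht)] using hp t t.2, ?_⟩
  have hneg : deriv (p - w : smoothFunctions) 0 < 0 := by
    refine deriv_neg_of_expOp_pos (fun t => ?_) hcard' (fun z hz => ?_) (hmem h0) fun z hz => ?_
    · simpa [mem_expSpace.1 hw] using hpos t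
    · simp [hwp z hz]
    · obtain ⟨t, -, rfl⟩ := mem_map.1 hz
      exact t.2
  rw [← smoothDeriv_apply, map_sub] at hneg
  exact (sub_neg.1 hneg).le

theorem AdmitsSlope.cons_of_le {b b' s δ : ℝ} {L : Multiset ℝ} (hp : AdmitsSlope (b ::ₘ L) s δ)
    (hbb' : b ≤ b') (hb' : 0 ≤ b') (hL : (∃ a ∈ L, 0 ≤ a) ∨ L = 0 ∧ s ≤ 0) :
    AdmitsSlope (b' ::ₘ L) s δ := by
  obtain rfl | hlt := hbb'.eq_or_lt
  · exact hp
  obtain ⟨p, hpM, rfl, hp1, hδ⟩ := hp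
  obtain ⟨c, hc⟩ := exists_expOp_eq_smul_of_mem_expSpace_cons hpM
  have hcL (t : ℝ) : expOp L p t = c * expMonomial 0 b t := congrFun (congrArg Subtype.val hc) t
  obtain hneg | hzero | hpos := lt_trichotomy ((-1) ^ L.card * c) 0
  · refine (admitsSlope_of_expOp_pos (Multiset.mem_cons_self b' L) hb' hp1 fun t => ?_).anti hδ
    have hb't : expOp (b' ::ₘ L) p t = c * ((b' - b) * expMonomial 0 b t) := by
      rw [expOp_cons, hc, map_smul, expOp_singleton_expMonomial_zero]
      rfl
    calc 0 < -((-1) ^ L.card * c) * ((b' - b) * expMonomial 0 b t) :=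
          mul_pos (neg_pos.2 hneg) (mul_pos (sub_pos.2 hlt) (expMonomial_zero_pos b t))
      _ = (-1) ^ (b' ::ₘ L).card * expOp (b' ::ₘ L) p t := by
          rw [hb't, Multiset.card_cons]
          ring
  · have hc0 : c = 0 := by simpa using hzero
    have hpL : p ∈ expSpace L := by rw [mem_expSpace, hc, hc0, zero_smul]
    exact ⟨p, expSpace_mono (Multiset.le_cons_self L b') hpL, rfl, hp1, hδ⟩
  · have hposL (t : ℝ) : 0 < (-1) ^ L.card * expOp L p t := by
      rw [hcL, ← mul_assoc]
      exact mul_pos hpos (expMonomial_zero_pos b t)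
    obtain ⟨a, haL, ha⟩ | ⟨rfl, hs⟩ := hL
    · exact ((admitsSlope_of_expOp_pos haL ha hp1 hposL).anti hδ).mono (Multiset.le_cons_self L b')
    · have h0 : 0 < p 0 := by simpa [expOp_zero] using hposL 0
      exact absurd hs h0.not_ge

theorem AdmitsSlope.add_right_of_rel {N N' K : Multiset ℝ} {s δ : ℝ}
    (hp : AdmitsSlope (N + K) s δ) (hrel : Multiset.Rel (· ≤ ·) N N') (hnonneg : ∀ a ∈ N + K, 0 ≤ a)
    (hs : 2 ≤ (N + K).card ∨ s ≤ 0) : AdmitsSlope (N' + K) s δ := by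
  induction hrel generalizing K with
  | zero => exact hp
  | @cons b b' N N' hbb' _ ih =>
    rw [Multiset.cons_add] at hp hnonneg hs
    have hb' : 0 ≤ b' := (hnonneg b (Multiset.mem_cons_self _ _)).trans hbb'
    have hNK (a : ℝ) (ha : a ∈ N + K) : 0 ≤ a := hnonneg a (Multiset.mem_cons_of_mem ha)
    have hL : (∃ a ∈ N + K, 0 ≤ a) ∨ N + K = 0 ∧ s ≤ 0 := by
      obtain hzero | ⟨a, ha⟩ := (N + K).empty_or_exists_mem
      · exact .inr ⟨hzero, hs.resolve_left (by simp [hzero])⟩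
      · exact .inl ⟨a, ha, hNK a ha⟩
    have hcons := hp.cons_of_le hbb' hb' hL
    rw [← Multiset.add_cons] at hcons
    rw [Multiset.cons_add, ← Multiset.add_cons]
    refine ih hcons (fun a ha => ?_) (by simpa using hs)
    rw [Multiset.add_cons, Multiset.mem_cons] at ha
    exact ha.elim (fun h => h ▸ hb') (hNK a)

theorem AdmitsSlope.of_rel {M M' : Multiset ℝ} {s δ : ℝ} (hp : AdmitsSlope M s δ)
    (hrel : Multiset.Rel (· ≤ ·) M M') (hnonneg : ∀ a ∈ M, 0 ≤ a) (hs : 2 ≤ M.card ∨ s ≤ 0) :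
    AdmitsSlope M' s δ := by
  rw [← add_zero M] at hp hnonneg hs
  simpa using hp.add_right_of_rel hrel hnonneg hs

/-! ### Comparison of `κ` -/

theorem natCard_lt_castSucc_and_eq {d : ℕ} (h : Fin (d + 1) → ℝ) (i : Fin d) :
    Nat.card {j : Fin (d + 1) // j < i.castSucc ∧ h j = h i.castSucc} =
      Nat.card {j : Fin d // j < i ∧ h j.castSucc = h i.castSucc} := by
  simp only [Nat.card_eq_fintype_card, Fintype.card_subtype, card_filter, Fin.sum_univ_castSucc]
  simp [(Fin.castSucc_lt_last i).not_gt]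

theorem natCard_lt_last_and_eq {d : ℕ} (h : Fin (d + 1) → ℝ) :
    Nat.card {j : Fin (d + 1) // j < Fin.last d ∧ h j = h (Fin.last d)} =
      (univ.val.map (h ∘ Fin.castSucc)).count (h (Fin.last d)) := by
  rw [Nat.card_eq_fintype_card, Fintype.card_subtype, Multiset.count_map, ← filter_val, ← card_def,
    card_filter, card_filter, Fin.sum_univ_castSucc]
  simp [Fin.castSucc_lt_last, eq_comm]

theorem coe_mem_expPoly_succ_iff {d : ℕ} {h : Fin (d + 1) → ℝ} {f : smoothFunctions} :
    (f : ℝ → ℝ) ∈ expPoly (d + 1) h ↔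
      ∃ c : ℝ, ((f - c • expMonomial ((univ.val.map (h ∘ Fin.castSucc)).count (h (Fin.last d)))
        (h (Fin.last d)) : smoothFunctions) : ℝ → ℝ) ∈ expPoly d (h ∘ Fin.castSucc) := by
  simp only [expPoly, Set.mem_ofPred_eq, Fin.sum_univ_castSucc, natCard_lt_castSucc_and_eq,
    natCard_lt_last_and_eq, Function.comp_apply, Submodule.coe_sub, Submodule.coe_smul,
    Pi.sub_apply, Pi.smul_apply, smul_eq_mul, expMonomial_apply, sub_eq_iff_eq_add, ← mul_assoc]
  constructor
  · rintro ⟨c, hc⟩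
    exact ⟨c (Fin.last d), fun i => c i.castSucc, hc⟩
  · rintro ⟨a, c, hc⟩
    exact ⟨Fin.snoc c a, by simpa using hc⟩

theorem coe_mem_expPoly_iff {d : ℕ} {h : Fin d → ℝ} {f : smoothFunctions} :
    (f : ℝ → ℝ) ∈ expPoly d h ↔ f ∈ expSpace (univ.val.map h) := by
  induction d generalizing f with
  | zero =>
    rw [univ_eq_empty, empty_val, Multiset.map_zero, mem_expSpace_zero, Subtype.ext_iff, funext_iff]
    simp [expPoly]
  | succ d ih =>
    have hmap : univ.val.map h = h (Fin.last d) ::ₘ univ.val.map (h ∘ Fin.castSucc) := by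
      simp [Fin.univ_castSuccEmb, Function.comp_def]
    rw [hmap, mem_expSpace_cons_iff, coe_mem_expPoly_succ_iff]
    exact exists_congr fun c => ih

theorem contDiff_of_mem_expPoly {d : ℕ} {h : Fin d → ℝ} {p : ℝ → ℝ} (hp : p ∈ expPoly d h) :
    ContDiff ℝ ∞ p := by
  obtain ⟨c, hc⟩ := hp
  rw [funext hc]
  fun_prop

theorem abs_expMonomial_le {m : ℕ} {b t : ℝ} (hb : 0 < b) (ht : 0 ≤ t) :
    |expMonomial m b t| ≤ m.factorial / b ^ m := by
  have hexp : (b * t) ^ m / m.factorial ≤ Real.exp (b * t) :=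
    Real.pow_div_factorial_le_exp _ (mul_nonneg hb.le ht) m
  rw [div_le_iff₀ (by positivity), mul_pow] at hexp
  rw [expMonomial_apply, abs_of_nonneg (by positivity), neg_mul, Real.exp_neg,
    ← div_eq_mul_inv, div_le_div_iff₀ (by positivity) (by positivity)]
  linarith

theorem exists_abs_le_of_mem_expSpace {M : Multiset ℝ} (hM : ∀ a ∈ M, 0 < a)
    {f : smoothFunctions} (hf : f ∈ expSpace M) : ∃ B, ∀ t ≥ 0, |f t| ≤ B := by
  induction M using Multiset.induction_on generalizing f with
  | empty => exact ⟨0, by simp [mem_expSpace_zero.1 hf]⟩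
  | cons b M ih =>
    obtain ⟨c, hc⟩ := mem_expSpace_cons_iff.1 hf
    obtain ⟨B, hB⟩ := ih (fun a ha => hM a (Multiset.mem_cons_of_mem ha)) hc
    refine ⟨B + |c| * ((M.count b).factorial / b ^ M.count b), fun t ht => ?_⟩
    calc |f t| = |(f - c • expMonomial (M.count b) b : smoothFunctions) t
            + c * expMonomial (M.count b) b t| := by simp
      _ ≤ B + |c * expMonomial (M.count b) b t| :=
          (abs_add_le _ _).trans (add_le_add_left (hB t ht) _)
      _ ≤ B + |c| * ((M.count b).factorial / b ^ M.count b) := by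
          rw [abs_mul]
          gcongr
          exact abs_expMonomial_le (hM b (Multiset.mem_cons_self b M)) ht

theorem supAbs_le_iff_of_mem_expSpace {M : Multiset ℝ} (hM : ∀ a ∈ M, 0 < a)
    {f : smoothFunctions} (hf : f ∈ expSpace M) {r : ℝ} :
    supAbs f ≤ r ↔ ∀ t ≥ 0, |f t| ≤ r := by
  obtain ⟨B, hB⟩ := exists_abs_le_of_mem_expSpace hM hf
  have hbdd : BddAbove ((fun t => |f t|) '' Set.Ici 0) := ⟨B, Set.forall_mem_image.2 hB⟩
  rw [supAbs, csSup_le_iff hbdd (Set.nonempty_Ici.image _), Set.forall_mem_image]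
  rfl

/-- The set of quotients whose infimum is `κ(h, ε)`, for `M` the multiset of the entries of `h`. -/
def kappaQuotients (M : Multiset ℝ) (ε : ℝ) : Set ℝ :=
  {y | ∃ f ∈ expSpace M, (∀ t ≥ 0, |f t| ≤ 1) ∧ ε * f 0 < deriv f 0 ∧
    y = (1 - f 0) / (deriv f 0 - ε * f 0)}

theorem kappa_eq_sInf_kappaQuotients {d : ℕ} {h : Fin d → ℝ} (hpos : ∀ i, 0 < h i) (ε : ℝ) :
    kappa d h ε = sInf (kappaQuotients (univ.val.map h) ε) := by
  have hM : ∀ a ∈ univ.val.map h, 0 < a := by simpa using hpos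
  rw [kappa, kappaQuotients]
  congr 1
  ext y
  constructor
  · rintro ⟨p, hp, hp1, hrest⟩
    let f : smoothFunctions := ⟨p, mem_smoothFunctions.2 (contDiff_of_mem_expPoly hp)⟩
    have hf : f ∈ expSpace (univ.val.map h) := coe_mem_expPoly_iff.1 hp
    exact ⟨f, hf, (supAbs_le_iff_of_mem_expSpace hM hf).1 hp1, hrest⟩
  · rintro ⟨f, hf, hf1, hrest⟩
    exact ⟨f, coe_mem_expPoly_iff.2 hf, (supAbs_le_iff_of_mem_expSpace hM hf).2 hf1, hrest⟩

theorem kappaQuotients_bddBelow (M : Multiset ℝ) (ε : ℝ) : BddBelow (kappaQuotients M ε) := by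
  refine ⟨0, ?_⟩
  rintro _ ⟨f, -, hf1, hslope, rfl⟩
  exact div_nonneg (sub_nonneg.2 (abs_le.1 (hf1 0 le_rfl)).2) (sub_pos.2 hslope).le

theorem kappaQuotients_nonempty {M : Multiset ℝ} {a ε : ℝ} (haM : a ∈ M) (ha : 0 ≤ a)
    (hε : 0 < ε) : (kappaQuotients M ε).Nonempty := by
  refine ⟨_, (-1 : ℝ) • expMonomial 0 a, Submodule.smul_mem _ _ (expMonomial_zero_mem_expSpace haM),
    fun t ht => abs_smul_expMonomial_zero_le_one ha (by simp) ht, ?_, rfl⟩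
  have hvalue : ((-1 : ℝ) • expMonomial 0 a : smoothFunctions) 0 = -1 := by
    simp [expMonomial_apply]
  have hderiv : deriv ((-1 : ℝ) • expMonomial 0 a : smoothFunctions) 0 = a := by
    rw [← smoothDeriv_apply, map_smul]
    simp [smoothDeriv_apply, deriv_expMonomial, expMonomial_apply]
  rw [hvalue, hderiv]
  linarith

theorem two_le_card_or_apply_zero_nonpos {M : Multiset ℝ} (hM : ∀ a ∈ M, 0 ≤ a) {ε : ℝ}
    (hε : 0 ≤ ε) {f : smoothFunctions} (hf : f ∈ expSpace M) (hslope : ε * f 0 < deriv f 0) :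
    2 ≤ M.card ∨ f 0 ≤ 0 := by
  refine or_iff_not_imp_left.2 fun hcard => ?_
  obtain hM0 | hM1 : M.card = 0 ∨ M.card = 1 := by lia
  · obtain rfl := Multiset.card_eq_zero.1 hM0
    simp [mem_expSpace_zero.1 hf]
  · obtain ⟨b, rfl⟩ := Multiset.card_eq_one.1 hM1
    have hode : deriv f 0 + b * f 0 = 0 := by
      rw [← expOp_singleton_apply, mem_expSpace.1 hf]
      rfl
    have hb : 0 ≤ b := hM b (Multiset.mem_singleton_self b)
    by_contra! hpos
    nlinarith [mul_nonneg hε hpos.le, mul_nonneg hb hpos.le]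

theorem exists_mem_kappaQuotients_le_of_rel {M M' : Multiset ℝ}
    (hrel : Multiset.Rel (· ≤ ·) M M') (hM : ∀ a ∈ M, 0 ≤ a) {ε : ℝ} (hε : 0 ≤ ε) {y : ℝ}
    (hy : y ∈ kappaQuotients M ε) : ∃ y' ∈ kappaQuotients M' ε, y' ≤ y := by
  obtain ⟨f, hf, hf1, hslope, rfl⟩ := hy
  have hadmits : AdmitsSlope M (f 0) (deriv f 0) := ⟨f, hf, rfl, hf1, le_rfl⟩
  obtain ⟨q, hq, hq0, hq1, hle⟩ :=
    hadmits.of_rel hrel hM (two_le_card_or_apply_zero_nonpos hM hε hf hslope)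
  refine ⟨_, ⟨q, hq, hq1, (hq0 ▸ hslope).trans_le hle, rfl⟩, ?_⟩
  rw [hq0]
  exact div_le_div_of_nonneg_left (sub_nonneg.2 (abs_le.1 (hf1 0 le_rfl)).2) (sub_pos.2 hslope)
    (sub_le_sub_right hle _)

theorem kappa_min_at_ones_general (d : ℕ) (hd : 1 ≤ d) (ε : ℝ) (hε : 0 < ε) (h h' : Fin d → ℝ)
    (hpos : ∀ i, 0 < h i) (hle : ∀ i, h i ≤ h' i) : kappa d h' ε ≤ kappa d h ε := by
  let i₀ : Fin d := ⟨0, hd⟩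
  have hrel : Multiset.Rel (· ≤ ·) (univ.val.map h) (univ.val.map h') :=
    Multiset.rel_map.2 (Multiset.rel_refl_of_refl_on fun i _ => hle i)
  rw [kappa_eq_sInf_kappaQuotients hpos,
    kappa_eq_sInf_kappaQuotients fun i => (hpos i).trans_le (hle i)]
  refine le_csInf (kappaQuotients_nonempty (Multiset.mem_map_of_mem h (mem_univ i₀))
    (hpos i₀).le hε) fun y hy => ?_
  obtain ⟨y', hy', hyle⟩ := exists_mem_kappaQuotients_le_of_rel hrel
    (by simpa using fun i => (hpos i).le) hε.le hy
  exact (csInf_le (kappaQuotients_bddBelow _ ε) hy').trans hyle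

/-- Extremality of the vector of ones: for every `h` with `0 < h₁ ≤ ⋯ ≤ h_d ≤ 1`
and every `ε > 0`, `κ(h, ε) ≥ κ(𝟙, ε)`, i.e. the minimum of `κ(·, ε)` over the
simplex is attained at `h = (1,…,1)` (where `P_𝟙` is the space of functions
`e^{−t} q(t)` with `q` a polynomial of degree `≤ d − 1`). -/
theorem kappa_min_at_ones (d : ℕ) (hd : 1 ≤ d) (ε : ℝ) (hε : 0 < ε)
    (h : Fin d → ℝ) (hmono : Monotone h) (hpos : ∀ i, 0 < h i) (hone : ∀ i, h i ≤ 1) :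
    kappa d (fun _ => (1 : ℝ)) ε ≤ kappa d h ε :=
  kappa_min_at_ones_general d hd ε hε h _ hpos hone
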